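/- The objective ℓ satisfies restricted strong convexity and restricted smoothness: (i) for all u, v : V → ℝ, ℓ(v) ≥ ℓ(u) + ⟨∇ℓ(u), v − u⟩ + λ‖v − u‖₂²; and (ii) for all u, v : V → ℝ whose combined support supp(u) ∪ supp(v) has cardinality at most M, ℓ(v) ≤ ℓ(u) + ⟨∇ℓ(u), v − u⟩ + (λ + M·G²)‖v − u‖₂². Here the gradient is given coordinatewise by (∇ℓ(u))_j = 2⟨∑_{i∈V} u_i g_i − b, g_j⟩ + 2λ u_j. -/

import Mathlib

open scoped BigOperators RealInnerProductSpace

/-- The regularized gradient-matching objective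
`ℓ(w) = ‖∑ᵢ wᵢ gᵢ − b‖₂² + λ ∑ᵢ wᵢ²`. -/
noncomputable def ell {V : Type*} [Fintype V] {d : ℕ}
    (g : V → EuclideanSpace ℝ (Fin d)) (b : EuclideanSpace ℝ (Fin d))
    (lam : ℝ) (w : V → ℝ) : ℝ :=
  ‖(∑ i, w i • g i) - b‖ ^ 2 + lam * ∑ i, (w i) ^ 2

/-- The gradient of `ℓ`: `(∇ℓ(u))ⱼ = 2⟨∑ᵢ uᵢ gᵢ − b, gⱼ⟩ + 2λ uⱼ`. -/
noncomputable def gradEll {V : Type*} [Fintype V] {d : ℕ}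
    (g : V → EuclideanSpace ℝ (Fin d)) (b : EuclideanSpace ℝ (Fin d))
    (lam : ℝ) (u : V → ℝ) (j : V) : ℝ :=
  2 * ⟪(∑ i, u i • g i) - b, g j⟫ + 2 * lam * u j

theorem ell_expand_aux {V : Type*} [Fintype V] {d : ℕ}
    (g : V → EuclideanSpace ℝ (Fin d)) (b : EuclideanSpace ℝ (Fin d)) (lam : ℝ) (u v : V → ℝ) :
    ell g b lam v = ell g b lam u + (∑ j, gradEll g b lam u j * (v j - u j))
      + lam * ∑ j, (v j - u j) ^ 2 + ‖∑ j, (v j - u j) • g j‖ ^ 2 := by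
  have h1 : (∑ i, v i • g i) - b = ((∑ i, u i • g i) - b) + ∑ j, (v j - u j) • g j := by
    simp only [sub_smul, Finset.sum_sub_distrib]
    abel
  have h2 : ∑ j, gradEll g b lam u j * (v j - u j)
      = 2 * ⟪(∑ i, u i • g i) - b, ∑ j, (v j - u j) • g j⟫
        + lam * ∑ j, 2 * u j * (v j - u j) := by
    rw [inner_sum, Finset.mul_sum, Finset.mul_sum, ← Finset.sum_add_distrib]
    refine Finset.sum_congr rfl fun j _ => ?_
    rw [real_inner_smul_right]
    unfold gradEll
    ring
  have h3 : ∑ i, (v i) ^ 2 = ∑ i, (u i) ^ 2 + ∑ j, 2 * u j * (v j - u j)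
      + ∑ j, (v j - u j) ^ 2 := by
    rw [← Finset.sum_add_distrib, ← Finset.sum_add_distrib]
    refine Finset.sum_congr rfl fun j _ => ?_
    ring
  rw [h2]
  unfold ell
  rw [h1, norm_add_sq_real, h3]
  ring

/-- Restricted strong convexity and restricted smoothness of the
regularized gradient-matching objective. -/
theorem ell_restricted_strong_convexity_smoothness
    {V : Type*} [Fintype V] [DecidableEq V] {d : ℕ} (hd : 1 ≤ d)
    (g : V → EuclideanSpace ℝ (Fin d)) (G : ℝ) (hG : ∀ i, ‖g i‖ ≤ G)
    (b : EuclideanSpace ℝ (Fin d)) (lam : ℝ) (hlam : 0 < lam)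
    (M : ℕ) (hM : 0 < M) :
    (∀ u v : V → ℝ,
      ell g b lam v ≥ ell g b lam u + (∑ j, gradEll g b lam u j * (v j - u j))
        + lam * ∑ j, (v j - u j) ^ 2) ∧
    (∀ u v : V → ℝ,
      (Function.support u ∪ Function.support v).ncard ≤ M →
      ell g b lam v ≤ ell g b lam u + (∑ j, gradEll g b lam u j * (v j - u j))
        + (lam + M * G ^ 2) * ∑ j, (v j - u j) ^ 2) := by
  refine ⟨fun u v => ?_, fun u v h => ?_⟩
  · rw [ell_expand_aux g b lam u v]
    linarith [sq_nonneg ‖∑ j, (v j - u j) • g j‖]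
  · rw [ell_expand_aux g b lam u v]
    suffices hs : ‖∑ j, (v j - u j) • g j‖ ^ 2 ≤ M * G ^ 2 * ∑ j, (v j - u j) ^ 2 by
      linarith
    let S : Finset V := Finset.univ.filter fun j => u j ≠ 0 ∨ v j ≠ 0
    have hS : S.card ≤ M := by
      have : (Function.support u ∪ Function.support v) = (S : Set V) := by
        ext j
        simp [S]
      rwa [this, Set.ncard_coe_finset] at h
    have h0 : ∀ j, j ∉ S → v j - u j = 0 := by
      intro j hj
      simp only [S, Finset.mem_filter, Finset.mem_univ, true_and, not_or, not_not] at hj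
      simp [hj.1, hj.2]
    have e1 : ∑ j, (v j - u j) • g j = ∑ j ∈ S, (v j - u j) • g j := by
      symm
      apply Finset.sum_subset (Finset.subset_univ _)
      intro j _ hj
      rw [h0 j hj, zero_smul]
    have e2 : ∑ j, (v j - u j) ^ 2 = ∑ j ∈ S, (v j - u j) ^ 2 := by
      symm
      apply Finset.sum_subset (Finset.subset_univ _)
      intro j _ hj
      rw [h0 j hj]
      norm_num
    rw [e1, e2]
    have hn : ‖∑ j ∈ S, (v j - u j) • g j‖ ≤ ∑ j ∈ S, |v j - u j| * G := by
      refine norm_sum_le_of_le _ fun j _ => ?_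
      rw [norm_smul, Real.norm_eq_abs]
      exact mul_le_mul_of_nonneg_left (hG j) (abs_nonneg _)
    calc ‖∑ j ∈ S, (v j - u j) • g j‖ ^ 2 ≤ (∑ j ∈ S, |v j - u j| * G) ^ 2 := by gcongr
      _ = (∑ j ∈ S, |v j - u j|) ^ 2 * G ^ 2 := by rw [← Finset.sum_mul, mul_pow]
      _ ≤ (S.card * ∑ j ∈ S, |v j - u j| ^ 2) * G ^ 2 := by
        gcongr
        exact sq_sum_le_card_mul_sum_sq
      _ = S.card * G ^ 2 * ∑ j ∈ S, (v j - u j) ^ 2 := by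
        simp only [sq_abs]
        ring
      _ ≤ M * G ^ 2 * ∑ j ∈ S, (v j - u j) ^ 2 := by gcongr
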